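/- For every α > 0 and every B > 1 there exist constants C > 0 and c > 0 such that for every positive integer M there exist real coefficients c_k and real exponents s_k > 0, k = −M, …, M, with sup_{ρ ∈ [1,B]} | ρ^{−α} − Σ_{k=−M}^{M} c_k e^{−ρ s_k} | ≤ C e^{−c √M}. In particular, ρ^{−α} admits, uniformly on [1,B], an approximation by an exponential sum with 2M+1 terms whose error decays exponentially in √M. -/

import Mathlib

open Real

/-!
The substitution `x = e^{-ρ}` maps `(0, ∞)` onto `(0, 1)`, the real diameter of the disc
`‖z - 1/2‖ < 1/2`. On this disc `-log z` is holomorphic with positive real part, so for `F`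
holomorphic on the right half-plane `F (-log z) / z` is holomorphic there, and on compact subsets
its Taylor polynomials at `1/2` converge geometrically. Since `F ρ = e^{-ρ} (F ρ / e^{-ρ})`, a
polynomial approximation in `x` of degree `n` is an approximation of `F ρ` by an exponential sum
with exponents `1, …, n + 1`. Taking `F z = z^{-α}` and `n = 2M` even gives an error decaying
exponentially in `M`. These exponents replace the nodes `log (1 + e^{k𝔥})` of the sinc quadrature.
-/

section PolynomialApproximation

open Polynomial

lemma exists_polynomial_eval_eq_partialSum {𝕜 : Type*} [NontriviallyNormedField 𝕜]
    (p : FormalMultilinearSeries 𝕜 𝕜 𝕜) (c : 𝕜) (n : ℕ) :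
    ∃ P : 𝕜[X], P.natDegree ≤ n ∧ ∀ z, P.eval z = p.partialSum (n + 1) (z - c) := by
  refine ⟨∑ k ∈ Finset.range (n + 1), C (p.coeff k) * (X - C c) ^ k, ?_, fun z => ?_⟩
  · refine natDegree_sum_le_of_forall_le _ _ fun k hk => ?_
    calc (C (p.coeff k) * (X - C c) ^ k).natDegree
        ≤ ((X - C c) ^ k).natDegree := natDegree_C_mul_le _ _
      _ = k := by
        rw [(monic_X_sub_C c).natDegree_pow, natDegree_X_sub_C, mul_one]
      _ ≤ n := Finset.mem_range_succ_iff.1 hk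
  · simp [FormalMultilinearSeries.partialSum, eval_finsetSum, mul_comm]

lemma exists_polynomial_geometric_approx {f : ℂ → ℂ} {c : ℂ} {R : ℝ} (hR : 0 < R)
    (hf : DifferentiableOn ℂ f (Metric.ball c R)) {K : Set ℂ} (hK : IsClosed K)
    (hKR : K ⊆ Metric.ball c R) :
    ∃ C > 0, ∃ a ∈ Set.Ioo (0 : ℝ) 1, ∀ n : ℕ, ∃ P : ℂ[X], P.natDegree ≤ n ∧
      ∀ z ∈ K, ‖f z - P.eval z‖ ≤ C * a ^ n := by
  obtain ⟨r, ⟨hr, hrR⟩, hKr⟩ := exists_pos_lt_subset_ball hR hK hKR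
  obtain ⟨R', hrR', hR'R⟩ := exists_between hrR
  lift r to NNReal using hr.le
  lift R' to NNReal using (hr.trans hrR').le
  have hp := (hf.mono (Metric.closedBall_subset_ball hR'R)).hasFPowerSeriesOnBall
    (NNReal.coe_pos.1 (hr.trans hrR'))
  obtain ⟨a, ⟨ha0, ha1⟩, C, hC, hbound⟩ :=
    hp.uniform_geometric_approx (ENNReal.coe_lt_coe.2 (NNReal.coe_lt_coe.1 hrR'))
  refine ⟨C, hC, a, ⟨ha0, ha1⟩, fun n => ?_⟩
  obtain ⟨P, hP, hPeval⟩ :=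
    exists_polynomial_eval_eq_partialSum (cauchyPowerSeries f c R') c n
  refine ⟨P, hP, fun z hz => ?_⟩
  have hzr : z - c ∈ Metric.ball 0 (r : ℝ) := by
    simpa [dist_eq_norm] using hKr hz
  calc ‖f z - P.eval z‖
      = ‖f (c + (z - c)) - (cauchyPowerSeries f c R').partialSum (n + 1) (z - c)‖ := by
        rw [hPeval, add_sub_cancel]
    _ ≤ C * a ^ (n + 1) := hbound _ hzr _
    _ ≤ C * a ^ n :=
        mul_le_mul_of_nonneg_left (pow_le_pow_of_le_one ha0.le ha1.le n.le_succ) hC.le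

end PolynomialApproximation

lemma re_neg_log_pos {z : ℂ} (hz0 : z ≠ 0) (hz1 : ‖z‖ < 1) : 0 < (-Complex.log z).re := by
  rw [Complex.neg_re, Complex.log_re]
  exact neg_pos.2 (log_neg (norm_pos_iff.2 hz0) hz1)

lemma differentiableOn_comp_neg_log_div {F : ℂ → ℂ} (hF : DifferentiableOn ℂ F {z | 0 < z.re}) :
    DifferentiableOn ℂ (fun z => F (-Complex.log z) / z) (Metric.ball (1 / 2) (1 / 2)) := by
  have hball_slit : Metric.ball (1 / 2 : ℂ) (1 / 2) ⊆ Complex.slitPlane :=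
    (Metric.ball_subset_ball' (by norm_num [dist_eq_norm])).trans Complex.ball_one_subset_slitPlane
  have hball_unit : Metric.ball (1 / 2 : ℂ) (1 / 2) ⊆ Metric.ball 0 1 :=
    Metric.ball_subset_ball' (by norm_num [dist_eq_norm])
  have hne (z) (hz : z ∈ Metric.ball (1 / 2 : ℂ) (1 / 2)) : z ≠ 0 :=
    Complex.slitPlane_ne_zero (hball_slit hz)
  have hlog : DifferentiableOn ℂ (fun z => -Complex.log z) (Metric.ball (1 / 2) (1 / 2)) :=
    (differentiableOn_id.clog fun _ hz => hball_slit hz).neg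
  exact (hF.comp hlog fun z hz =>
    re_neg_log_pos (hne z hz) (mem_ball_zero_iff.1 (hball_unit hz))).div differentiableOn_id hne

lemma ofReal_mem_ball_half {x : ℝ} (hx : x ∈ Set.Ioo (0 : ℝ) 1) :
    (x : ℂ) ∈ Metric.ball (1 / 2 : ℂ) (1 / 2) := by
  have hsub : (x : ℂ) - 1 / 2 = ((x - 1 / 2 : ℝ) : ℂ) := by push_cast; rfl
  rw [mem_ball_iff_norm, hsub, Complex.norm_real, norm_eq_abs, abs_lt]
  constructor <;> linarith [hx.1, hx.2]

lemma sum_coeff_mul_exp {P : Polynomial ℂ} {n : ℕ} (hP : P.natDegree ≤ n) (ρ : ℝ) :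
    ∑ k ∈ Finset.range (n + 1), P.coeff k * (Real.exp (-ρ * (k + 1)) : ℝ)
      = (Real.exp (-ρ) : ℝ) * P.eval ((Real.exp (-ρ) : ℝ) : ℂ) := by
  rw [Polynomial.eval_eq_sum_range' (Nat.lt_succ_of_le hP), Finset.mul_sum]
  refine Finset.sum_congr rfl fun k _ => ?_
  have hpow : Real.exp (-ρ * (k + 1)) = Real.exp (-ρ) ^ (k + 1) := by
    rw [← exp_nat_mul, mul_comm, Nat.cast_succ]
  rw [hpow, Complex.ofReal_pow]
  ring

theorem exists_exp_sum_geometric_approx {F : ℂ → ℂ} (hF : DifferentiableOn ℂ F {z | 0 < z.re})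
    {K : Set ℝ} (hK : IsCompact K) (hK0 : K ⊆ Set.Ioi 0) :
    ∃ C > 0, ∃ a ∈ Set.Ioo (0 : ℝ) 1, ∀ n : ℕ, ∃ b : ℕ → ℂ, ∀ ρ ∈ K,
      ‖F ρ - ∑ k ∈ Finset.range (n + 1), b k * (Real.exp (-ρ * (k + 1)) : ℝ)‖ ≤ C * a ^ n := by
  have hL : IsClosed ((fun ρ : ℝ => (Real.exp (-ρ) : ℂ)) '' K) :=
    (hK.image (by fun_prop)).isClosed
  have hL_ball : (fun ρ : ℝ => (Real.exp (-ρ) : ℂ)) '' K ⊆ Metric.ball (1 / 2) (1 / 2) :=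
    Set.image_subset_iff.2 fun ρ hρ => ofReal_mem_ball_half
      ⟨exp_pos _, exp_lt_one_iff.2 (neg_lt_zero.2 (hK0 hρ))⟩
  obtain ⟨C, hC, a, ha, happrox⟩ := exists_polynomial_geometric_approx one_half_pos
    (differentiableOn_comp_neg_log_div hF) hL hL_ball
  refine ⟨C, hC, a, ha, fun n => ?_⟩
  obtain ⟨P, hP, hPbound⟩ := happrox n
  refine ⟨P.coeff, fun ρ hρ => ?_⟩
  let x := Real.exp (-ρ)
  have hx0 : (x : ℂ) ≠ 0 := by exact_mod_cast (exp_pos (-ρ)).ne'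
  have hx1 : ‖(x : ℂ)‖ ≤ 1 := by
    rw [Complex.norm_of_nonneg (exp_pos _).le]
    exact exp_le_one_iff.2 (neg_nonpos.2 (hK0 hρ).le)
  have hlog : -Complex.log x = ρ := by
    rw [← Complex.ofReal_log (exp_pos _).le, log_exp, Complex.ofReal_neg, neg_neg]
  calc ‖F ρ - ∑ k ∈ Finset.range (n + 1), P.coeff k * (Real.exp (-ρ * (k + 1)) : ℝ)‖
      = ‖(x : ℂ)‖ * ‖F (-Complex.log x) / x - P.eval (x : ℂ)‖ := by
        rw [sum_coeff_mul_exp hP, hlog, ← norm_mul, mul_sub, mul_div_cancel₀ _ hx0]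
    _ ≤ 1 * (C * a ^ n) :=
        mul_le_mul hx1 (hPbound x ⟨ρ, hρ, rfl⟩) (norm_nonneg _) zero_le_one
    _ = C * a ^ n := one_mul _

lemma differentiableOn_cpow_const_re_pos (s : ℂ) :
    DifferentiableOn ℂ (fun z => z ^ s) {z : ℂ | 0 < z.re} :=
  differentiableOn_id.cpow_const fun _ hz => Or.inl hz

lemma sum_Icc_neg_toNat_add {A : Type*} [AddCommMonoid A] (f : ℕ → A) (M : ℕ) :
    ∑ k ∈ Finset.Icc (-(M : ℤ)) M, f (k + M).toNat = ∑ j ∈ Finset.range (2 * M + 1), f j := by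
  refine Finset.sum_nbij' (fun k => (k + M).toNat) (fun j => (j : ℤ) - M) ?_ ?_ ?_ ?_
    fun _ _ => rfl
  all_goals simp only [Finset.mem_Icc, Finset.mem_range]; omega

theorem stmt12_general (α : ℝ) {K : Set ℝ} (hK : IsCompact K) (hK0 : K ⊆ Set.Ioi 0) :
    ∃ C c : ℝ, 0 < C ∧ 0 < c ∧ ∀ M : ℕ,
      ∃ co s : ℤ → ℝ, (∀ k, 0 < s k) ∧
        ∀ ρ ∈ K,
          |ρ ^ (-α) - ∑ k ∈ Finset.Icc (-(M : ℤ)) (M : ℤ), co k * Real.exp (-ρ * s k)| ≤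
            C * Real.exp (-c * M) := by
  obtain ⟨C, hC, a, ⟨ha0, ha1⟩, happrox⟩ :=
    exists_exp_sum_geometric_approx (differentiableOn_cpow_const_re_pos (-α : ℝ)) hK hK0
  refine ⟨C, -(2 * log a), hC, by linarith [log_neg ha0 ha1], fun M => ?_⟩
  obtain ⟨b, hb⟩ := happrox (2 * M)
  refine ⟨fun k => (b (k + M).toNat).re, fun k => (k + M).toNat + 1, fun k => by positivity,
    fun ρ hρ => ?_⟩
  have hrate : a ^ (2 * M) = Real.exp (-(-(2 * log a)) * M) := by
    rw [← exp_log (pow_pos ha0 _), log_pow]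
    push_cast
    ring_nf
  have hre : (((ρ : ℂ) ^ ((-α : ℝ) : ℂ)) - ∑ j ∈ Finset.range (2 * M + 1),
      b j * (Real.exp (-ρ * (j + 1)) : ℝ)).re
      = ρ ^ (-α) - ∑ j ∈ Finset.range (2 * M + 1), (b j).re * Real.exp (-ρ * (j + 1)) := by
    rw [← Complex.ofReal_cpow (hK0 hρ).le, Complex.sub_re, Complex.ofReal_re, Complex.re_sum]
    simp only [Complex.re_mul_ofReal]
  rw [sum_Icc_neg_toNat_add (fun j => (b j).re * Real.exp (-ρ * (j + 1))), ← hre, ← hrate]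
  exact (Complex.abs_re_le_norm _).trans (hb ρ hρ)

lemma exp_neg_mul_natCast_le_exp_neg_mul_sqrt {c : ℝ} (hc : 0 ≤ c) (n : ℕ) :
    Real.exp (-c * n) ≤ Real.exp (-c * √n) := by
  have hsqrt : √(n : ℝ) ≤ n := sqrt_le_self_iff.2 <| by
    exact_mod_cast n.eq_zero_or_pos
  exact exp_le_exp.2 (mul_le_mul_of_nonpos_left hsqrt (neg_nonpos.2 hc))

/-- For every `α > 0` and `B > 1`, `ρ^{-α}` admits, uniformly on `[1,B]`, approximations
by exponential sums with `2M+1` terms and positive exponents whose error decays like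
`C e^{-c √M}`. -/
theorem stmt12 (α B : ℝ) (hα : 0 < α) (hB : 1 < B) :
    ∃ C c : ℝ, 0 < C ∧ 0 < c ∧ ∀ M : ℕ, 0 < M →
      ∃ co s : ℤ → ℝ, (∀ k ∈ Finset.Icc (-(M : ℤ)) (M : ℤ), 0 < s k) ∧
        ∀ ρ ∈ Set.Icc (1 : ℝ) B,
          |ρ ^ (-α) - ∑ k ∈ Finset.Icc (-(M : ℤ)) (M : ℤ), co k * Real.exp (-ρ * s k)| ≤
            C * Real.exp (-c * Real.sqrt M) := by
  obtain ⟨C, c, hC, hc, h⟩ :=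
    stmt12_general α (isCompact_Icc (a := 1) (b := B)) fun _ hρ => one_pos.trans_le hρ.1
  exact ⟨C, c, hC, hc, fun M _ => (h M).imp fun _ => Exists.imp fun _ ⟨hs, hbound⟩ =>
    ⟨fun k _ => hs k, fun ρ hρ => (hbound ρ hρ).trans <|
      mul_le_mul_of_nonneg_left (exp_neg_mul_natCast_le_exp_neg_mul_sqrt hc.le M) hC.le⟩⟩
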